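/- If G is an imbalanced weak subdivision of K_{3,3}, then there exists a graph G′, obtained from G by moving one edge between two adjacent chains of G, such that d_2(G′) ≤ d_2(G), d_3(G′) < d_3(G) and d_4(G′) < d_4(G). -/

import Mathlib

open Classical Finset

noncomputable section

/-- A finite multigraph: edges carry two (possibly equal) endpoints. -/
structure Multigraph where
  V : Type
  E : Type
  [fintV : Fintype V]
  [fintE : Fintype E]
  src : E → V
  tgt : E → V

attribute [instance] Multigraph.fintV Multigraph.fintE

namespace Multigraph

variable (G : Multigraph)

/-- Number of vertices. -/
def nV : ℕ := Fintype.card G.V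

/-- Number of edges (with multiplicity). -/
def nE : ℕ := Fintype.card G.E

/-- One step along an edge belonging to the edge set `S`. -/
def stepOn (S : Finset G.E) (u v : G.V) : Prop :=
  ∃ e ∈ S, (G.src e = u ∧ G.tgt e = v) ∨ (G.src e = v ∧ G.tgt e = u)

/-- The spanning subgraph with edge set `S` is connected. -/
def ConnOn (S : Finset G.E) : Prop :=
  ∀ u v : G.V, Relation.ReflTransGen (G.stepOn S) u v

/-- `G` is connected. -/
def Connected : Prop := G.ConnOn Finset.univ

/-- The edge set `F` disconnects `G` (i.e. is a disconnection). -/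
def Disconnects (F : Finset G.E) : Prop := ¬ G.ConnOn (Finset.univ \ F)

/-- `d i G`: the number of `i`-disconnections of `G`. -/
def d (i : ℕ) : ℕ :=
  ((Finset.univ : Finset (Finset G.E)).filter fun F => F.card = i ∧ G.Disconnects F).card

/-- The all-terminal reliability `R(G,p)`: each edge is independently retained with
probability `p`; this is the probability that the retained spanning subgraph is connected. -/
def rel (p : ℝ) : ℝ :=
  ∑ S : Finset G.E, if G.ConnOn S then p ^ S.card * (1 - p) ^ (G.nE - S.card) else 0

/-- `e` is a bridge. -/
def IsBridge (e : G.E) : Prop := G.Disconnects {e}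

def Bridgeless : Prop := ∀ e : G.E, ¬ G.IsBridge e

/-- The number of spanning trees of `G` (connected spanning subgraphs with `nV - 1` edges). -/
def treeCount : ℕ :=
  ((Finset.univ : Finset (Finset G.E)).filter fun S => S.card + 1 = G.nV ∧ G.ConnOn S).card

/-- The edge-connectivity: the least size of a disconnecting set of edges. -/
def edgeConnectivity : ℕ :=
  sInf {i : ℕ | ∃ F : Finset G.E, F.card = i ∧ G.Disconnects F}

/-- Degree of a vertex (a loop counts twice). -/
def deg (v : G.V) : ℕ :=
  (Finset.univ.filter fun e => G.src e = v).card +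
    (Finset.univ.filter fun e => G.tgt e = v).card

/-- The edges crossing the vertex set `A`. -/
def cutEdges (A : Finset G.V) : Finset G.E :=
  Finset.univ.filter fun e =>
    (G.src e ∈ A ∧ G.tgt e ∉ A) ∨ (G.src e ∉ A ∧ G.tgt e ∈ A)

/-- `F` is a cut: the set of edges crossing a nontrivial bipartition of the vertices. -/
def IsCut (F : Finset G.E) : Prop :=
  ∃ A : Finset G.V, A.Nonempty ∧ A ≠ Finset.univ ∧ F = G.cutEdges A

/-- `F` is a bond: a minimal cut. -/
def IsBond (F : Finset G.E) : Prop :=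
  G.IsCut F ∧ ∀ F' ⊆ F, G.IsCut F' → F' = F

/-- Number of `s`-bonds of `G`. -/
def bondCount (s : ℕ) : ℕ :=
  ((Finset.univ : Finset (Finset G.E)).filter fun F => F.card = s ∧ G.IsBond F).card

/-- Adjacency of vertices. -/
def Adj (u v : G.V) : Prop :=
  ∃ e : G.E, (G.src e = u ∧ G.tgt e = v) ∨ (G.src e = v ∧ G.tgt e = u)

/-- `G` is simple: no loops and no parallel edges. -/
def IsSimple : Prop :=
  (∀ e : G.E, G.src e ≠ G.tgt e) ∧
    ∀ e f : G.E,
      ((G.src e = G.src f ∧ G.tgt e = G.tgt f) ∨ (G.src e = G.tgt f ∧ G.tgt e = G.src f)) →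
        e = f

end Multigraph

/-- `G ∈ 𝒢_{n,m}`: connected with `n` vertices and `m` edges. -/
def memG (G : Multigraph) (n m : ℕ) : Prop :=
  G.nV = n ∧ G.nE = m ∧ G.Connected

/-- Isomorphism of multigraphs. -/
structure MGIso (G H : Multigraph) where
  vMap : G.V ≃ H.V
  eMap : G.E ≃ H.E
  ends_eq : ∀ e : G.E,
    (H.src (eMap e) = vMap (G.src e) ∧ H.tgt (eMap e) = vMap (G.tgt e)) ∨
    (H.src (eMap e) = vMap (G.tgt e) ∧ H.tgt (eMap e) = vMap (G.src e))

def IsIso (G H : Multigraph) : Prop := Nonempty (MGIso G H)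

/-- `G` is `p`-optimal in `𝒢_{n,m}`. -/
def pOptimal (G : Multigraph) (n m : ℕ) (p : ℝ) : Prop :=
  memG G n m ∧ ∀ H : Multigraph, memG H n m → H.rel p ≤ G.rel p

/-- `G` is uniquely optimal in `𝒢_{n,m}`: strictly more reliable than every
non-isomorphic member, for every `p ∈ (0,1)`. -/
def UniquelyOptimal (G : Multigraph) (n m : ℕ) : Prop :=
  memG G n m ∧ ∀ H : Multigraph, memG H n m → ¬ IsIso G H →
    ∀ p : ℝ, 0 < p → p < 1 → H.rel p < G.rel p

noncomputable instance quotFintype {α : Type} [Fintype α] {r : α → α → Prop} :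
    Fintype (Quot r) :=
  letI := Classical.decEq (Quot r)
  Fintype.ofSurjective (Quot.mk r) fun q => Quot.exists_rep q

/-- Identification of the endpoints of zero-weight edges. -/
def zeroRel (D : Multigraph) (w : D.E → ℕ) : D.V → D.V → Prop :=
  fun u v => ∃ e : D.E, w e = 0 ∧ D.src e = u ∧ D.tgt e = v

/-- The `j`-th node along the chain replacing the edge `e` (whose chain has `w e` edges). -/
def chainNode (D : Multigraph) (w : D.E → ℕ) (e : D.E) (j : ℕ) :
    Quot (zeroRel D w) ⊕ (Σ f : D.E, Fin (w f - 1)) :=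
  if h : 0 < j ∧ j < w e then Sum.inr ⟨e, ⟨j - 1, by omega⟩⟩
  else if j = 0 then Sum.inl (Quot.mk _ (D.src e))
  else Sum.inl (Quot.mk _ (D.tgt e))

/-- The weak subdivision of `D` determined by the chain lengths `w`: each edge `e` is
replaced by a chain with `w e` edges; zero-weight edges are contracted. -/
def subdivide (D : Multigraph) (w : D.E → ℕ) : Multigraph where
  V := Quot (zeroRel D w) ⊕ (Σ f : D.E, Fin (w f - 1))
  E := Σ f : D.E, Fin (w f)
  src f := chainNode D w f.1 f.2.val
  tgt f := chainNode D w f.1 (f.2.val + 1)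

/-- The zero-weight edges contain no cycle (no "zero cycle"): they form a forest. -/
def ZeroAcyclic (D : Multigraph) (w : D.E → ℕ) : Prop :=
  Fintype.card (Quot (zeroRel D w)) +
      (Finset.univ.filter fun e : D.E => w e = 0).card = Fintype.card D.V

/-- `G` is a weak subdivision of `D` with chain lengths `w`. -/
def IsWeakSubdivision (G D : Multigraph) (w : D.E → ℕ) : Prop :=
  ZeroAcyclic D w ∧ IsIso G (subdivide D w)

/-- `D` is a weak distillation of `G`. -/
def IsWeakDistillation (D G : Multigraph) : Prop :=
  ∃ w : D.E → ℕ, IsWeakSubdivision G D w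

/-- The chain lengths differ pairwise by at most one. -/
def BalancedWeights {E : Type} (w : E → ℕ) : Prop := ∀ e f : E, w e ≤ w f + 1

/-- `D ∈ 𝒟_k`: connected, cubic, 3-edge-connected, of exceedance `k`. -/
def memDk (k : ℕ) (D : Multigraph) : Prop :=
  D.Connected ∧ (∀ v : D.V, D.deg v = 3) ∧
    (∀ F : Finset D.E, D.Disconnects F → 3 ≤ F.card) ∧ D.nE = D.nV + k

/-- Identification of the two endpoints of the edge `e`. -/
def contractRel (G : Multigraph) (e : G.E) : G.V → G.V → Prop :=
  fun u v => u = G.src e ∧ v = G.tgt e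

/-- Contraction of the edge `e`. -/
def Multigraph.contract (G : Multigraph) (e : G.E) : Multigraph :=
  letI := Classical.decEq G.E
  { V := Quot (contractRel G e)
    E := {f : G.E // f ≠ e}
    src := fun f => Quot.mk _ (G.src f.1)
    tgt := fun f => Quot.mk _ (G.tgt f.1) }

/-- `G'` is obtained from `G` by shifting an edge: in an intermediate graph `H`
(the expansion of `G` at a vertex by the new edge `e'`), the edges `e, e'` form a
2-bond; contracting `e'` gives back `G`, while contracting `e` gives `G'`. -/
def IsShiftOf (G G' : Multigraph) : Prop :=
  ∃ (H : Multigraph) (e e' : H.E), e ≠ e' ∧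
    H.src e ≠ H.tgt e ∧ H.src e' ≠ H.tgt e' ∧
    H.IsBond {e, e'} ∧
    IsIso (H.contract e') G ∧ IsIso (H.contract e) G'

/-- Equivalence of graphs: repeated edge shifting. -/
def EquivalentGraphs (G G' : Multigraph) : Prop :=
  Relation.ReflTransGen IsShiftOf G G'

/-- `G'` is obtained from `G` by moving the (non-loop) edge `e`: contracting `e` and
expanding a new edge, identified with `e` via `φ`, at an arbitrary vertex.
Equivalently, `G/e` and `G'/φ e` agree, compatibly with the edge identification `φ`. -/
def MovedEdge (G G' : Multigraph) (φ : G.E ≃ G'.E) (e : G.E) : Prop :=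
  G.src e ≠ G.tgt e ∧ G'.src (φ e) ≠ G'.tgt (φ e) ∧
  ∃ ψ : Quot (contractRel G e) ≃ Quot (contractRel G' (φ e)),
    ∀ f : G.E, f ≠ e →
      ((ψ (Quot.mk _ (G.src f)) = Quot.mk _ (G'.src (φ f)) ∧
        ψ (Quot.mk _ (G.tgt f)) = Quot.mk _ (G'.tgt (φ f))) ∨
       (ψ (Quot.mk _ (G.src f)) = Quot.mk _ (G'.tgt (φ f)) ∧
        ψ (Quot.mk _ (G.tgt f)) = Quot.mk _ (G'.src (φ f))))

/-- Move one edge from the chain `a` to the chain `b`. -/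
def moveWeight {E : Type} (w : E → ℕ) (a b : E) : E → ℕ :=
  fun g => if g = b then w b + 1 else if g = a then w a - 1 else w g

/-- The chains of maximal length. -/
def maxChains (D : Multigraph) (w : D.E → ℕ) : Finset D.E :=
  Finset.univ.filter fun e => ∀ f : D.E, w f ≤ w e

/-- The chains of minimal length. -/
def minChains (D : Multigraph) (w : D.E → ℕ) : Finset D.E :=
  Finset.univ.filter fun e => ∀ f : D.E, w e ≤ w f

/-- Degree of `v` within the edge set `S`. -/
def degIn (D : Multigraph) (S : Finset D.E) (v : D.V) : ℕ :=
  (S.filter fun e => D.src e = v).card + (S.filter fun e => D.tgt e = v).card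

/-- `S` is a matching (pairwise non-adjacent edges). -/
def IsMatchingIn (D : Multigraph) (S : Finset D.E) : Prop := ∀ v : D.V, degIn D S v ≤ 1

/-- `S` is a path with three edges. -/
def IsPath3In (D : Multigraph) (S : Finset D.E) : Prop :=
  S.card = 3 ∧ (∀ v : D.V, degIn D S v ≤ 2) ∧
    (Finset.univ.filter fun v : D.V => degIn D S v = 1).card = 2

/-- `S` is the disjoint union of a path with three edges and a single edge. -/
def IsPath3PlusEdgeIn (D : Multigraph) (S : Finset D.E) : Prop :=
  S.card = 4 ∧ (∀ v : D.V, degIn D S v ≤ 2) ∧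
    (Finset.univ.filter fun v : D.V => degIn D S v = 1).card = 4 ∧
    ∃ e ∈ S, degIn D S (D.src e) = 2 ∧ degIn D S (D.tgt e) = 2

/-- `S` is the disjoint union of two paths with two edges each. -/
def IsTwoPlusTwoIn (D : Multigraph) (S : Finset D.E) : Prop :=
  S.card = 4 ∧ (∀ v : D.V, degIn D S v ≤ 2) ∧
    (Finset.univ.filter fun v : D.V => degIn D S v = 1).card = 4 ∧
    ∀ e ∈ S, degIn D S (D.src e) = 1 ∨ degIn D S (D.tgt e) = 1

/-- Two edges sharing a vertex. -/
def AdjEdges (D : Multigraph) (a b : D.E) : Prop :=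
  ∃ v : D.V, (D.src a = v ∨ D.tgt a = v) ∧ (D.src b = v ∨ D.tgt b = v)

/-- The number of incidences of edges of weight `c` at the vertex `u`. -/
def incCount (D : Multigraph) (w : D.E → ℕ) (u : D.V) (c : ℕ) : ℕ :=
  (Finset.univ.filter fun e : D.E => D.src e = u ∧ w e = c).card +
    (Finset.univ.filter fun e : D.E => D.tgt e = u ∧ w e = c).card

/-- The `π^v`-value of the vertex `u`: the number of incident edges of weight `q + 1`
minus the number of incident edges of weight `q - 1`. -/
def piV (D : Multigraph) (w : D.E → ℕ) (q : ℕ) (u : D.V) : ℤ :=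
  (incCount D w u (q + 1) : ℤ) -
    (if q = 0 then 0 else (incCount D w u (q - 1) : ℤ))

/-- The `π^v`-values are balanced: pairwise differences at most one. -/
def BalancedPiV (D : Multigraph) (w : D.E → ℕ) (q : ℕ) : Prop :=
  ∀ u v : D.V, piV D w q u ≤ piV D w q v + 1

/-- The standard weight `q`, where `m = 3kq + r` with `-3k/2 < r ≤ 3k/2`. -/
def stdWeight (m k : ℕ) : ℕ := (2 * m + 3 * k - 1) / (6 * k)

/-- `w` is a balanced weighting of `D` of total size `m` (the implied weak
subdivision is the generic member of `ℬ_m(D)`). -/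
def IsBalancedWeighting (D : Multigraph) (w : D.E → ℕ) (m : ℕ) : Prop :=
  (∑ e : D.E, w e) = m ∧ BalancedWeights w ∧ ZeroAcyclic D w

/-- Every 3-bond of `D` is trivial (consists of the three edges at a single vertex). -/
def OnlyTrivialThreeBonds (D : Multigraph) : Prop :=
  ∀ F : Finset D.E, D.IsBond F → F.card = 3 →
    ∃ u : D.V, F = Finset.univ.filter fun e => D.src e = u ∨ D.tgt e = u

/-- The 3-dipole: two vertices joined by three parallel edges. -/
def dipole3 : Multigraph where
  V := Fin 2
  E := Fin 3
  src _ := 0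
  tgt _ := 1

/-- The complete graph `K₄`. -/
def K4 : Multigraph where
  V := Fin 4
  E := {p : Fin 4 × Fin 4 // p.1 < p.2}
  src p := p.1.1
  tgt p := p.1.2

/-- The complete bipartite graph `K_{3,3}`. -/
def K33 : Multigraph where
  V := Fin 3 ⊕ Fin 3
  E := Fin 3 × Fin 3
  src p := Sum.inl p.1
  tgt p := Sum.inr p.2

/-- The triangular prism `Π₃`; the edges `Sum.inr i` are the rungs. -/
def prism : Multigraph where
  V := Fin 3 × Bool
  E := (Fin 3 × Bool) ⊕ Fin 3
  src := fun e => match e with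
    | Sum.inl (i, b) => (i, b)
    | Sum.inr i => (i, false)
  tgt := fun e => match e with
    | Sum.inl (i, b) => (i + 1, b)
    | Sum.inr i => (i, true)

/-- The Wagner graph (the 4-Möbius ladder): the edges `Sum.inl i` are the rails
(the 8-cycle) and the edges `Sum.inr j` are the rungs. -/
def wagner : Multigraph where
  V := Fin 8
  E := Fin 8 ⊕ Fin 4
  src := fun e => match e with
    | Sum.inl i => i
    | Sum.inr j => ⟨j.val, by omega⟩
  tgt := fun e => match e with
    | Sum.inl i => i + 1
    | Sum.inr j => ⟨j.val + 4, by omega⟩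

/-- The Petersen graph. -/
def petersen : Multigraph where
  V := Fin 5 × Bool
  E := Fin 5 ⊕ Fin 5 ⊕ Fin 5
  src := fun e => match e with
    | Sum.inl i => (i, false)
    | Sum.inr (Sum.inl i) => (i, false)
    | Sum.inr (Sum.inr i) => (i, true)
  tgt := fun e => match e with
    | Sum.inl i => (i + 1, false)
    | Sum.inr (Sum.inl i) => (i, true)
    | Sum.inr (Sum.inr i) => (i + 2, true)

/-!
A set of `i` edges of a subdivision of `D` fails to disconnect it exactly when its edges lie on
distinct chains, forming a set whose deletion keeps `D` connected. Hence `choose m i - d i` is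
the sum, over the `i`-element sets `T` of edges of `D` whose deletion leaves `D` connected, of the
products over `T` of the chain lengths. For `K33` these sums are polynomials in the `3 × 3` matrix
`M` of chain lengths, and moving an edge within a row between two entries differing by `d` changes
the cubic and quartic ones by explicit expressions in `d` and the two other rows.

Suppose no move is an improvement. If two columns differ by at least `2` in some row, then the
largest difference between them must be matched by an opposite one in another row. The vector of
differences of these two columns then has entries `x`, `-x` and `y`, whose second elementary
symmetric polynomial is `-x ^ 2`. When `x` and `-x` stand in rows `0` and `1`, the failure of the
move in row `0` makes the same polynomial nonnegative on the difference of rows `1` and `2`, so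
these rows differ by at most `1` everywhere; by symmetry so do rows `0` and `2`. This squeezes row
`2` strictly between the two others and again produces a difference vector of negative polynomial,
a contradiction. So adjacent chains have lengths differing by at most `1`, and one last move
excludes a difference of `2` between chains that are not adjacent.
-/

namespace Multigraph

variable {G : Multigraph}

theorem connOn_iff_forall_invariant {S : Finset G.E} :
    G.ConnOn S ↔ ∀ p : G.V → Prop, (∀ e ∈ S, (p (G.src e) ↔ p (G.tgt e))) →
      ∀ u v, p u → p v := by
  constructor
  · intro h p hp u v hu
    induction h u v with
    | refl => exact hu
    | tail _ hstep ih =>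
      obtain ⟨e, he, ⟨rfl, rfl⟩ | ⟨rfl, rfl⟩⟩ := hstep
      · exact (hp e he).1 ih
      · exact (hp e he).2 ih
  · intro h u v
    refine h (Relation.ReflTransGen (G.stepOn S) u) (fun e he => ?_) u v .refl
    exact ⟨fun hx => hx.tail ⟨e, he, .inl ⟨rfl, rfl⟩⟩, fun hx => hx.tail ⟨e, he, .inr ⟨rfl, rfl⟩⟩⟩

/-- One oriented step along an edge of `S`. Its quotient is the set of connected components of the
spanning subgraph with edge set `S`; for the edges of weight zero it is `zeroRel`. -/
def joins (G : Multigraph) (S : Finset G.E) (u v : G.V) : Prop :=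
  ∃ e ∈ S, G.src e = u ∧ G.tgt e = v

/-- The number of connected components of the spanning subgraph with edge set `S`. -/
def numComponents (G : Multigraph) (S : Finset G.E) : ℕ := Nat.card (Quot (G.joins S))

/-- The edge set `S` is acyclic, expressed by the Euler characteristic as in `ZeroAcyclic`. -/
def IsForest (G : Multigraph) (S : Finset G.E) : Prop := G.numComponents S + #S = G.nV

theorem numComponents_empty : G.numComponents ∅ = G.nV := by
  have hinj : Function.Injective (Quot.mk (G.joins ∅)) := fun u v huv =>
    congrArg (Quot.lift (r := G.joins ∅) id fun _ _ ⟨_, he, _⟩ => absurd he (notMem_empty _)) huv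
  rw [numComponents, nV, ← Nat.card_eq_fintype_card]
  exact (Nat.card_congr (.ofBijective _ ⟨hinj, Quot.mk_surjective⟩)).symm

theorem numComponents_le_numComponents_insert_add_one (S : Finset G.E) (e : G.E) :
    G.numComponents S ≤ G.numComponents (insert e S) + 1 := by
  set c : G.V → Quot (G.joins S) := Quot.mk _
  -- Adding `e` merges the component of `tgt e` into that of `src e` and changes nothing else.
  let merge (v : G.V) : Quot (G.joins S) := if c v = c (G.tgt e) then c (G.src e) else c v
  have hmerge : ∀ u v, G.joins (insert e S) u v → merge u = merge v := by
    rintro u v ⟨e', he', rfl, rfl⟩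
    obtain rfl | he' := mem_insert.1 he'
    · simp [merge]
    · have : c (G.src e') = c (G.tgt e') := Quot.sound ⟨e', he', rfl, rfl⟩
      simp only [merge, this]
  have hsurj : Function.Surjective fun o : Option (Quot (G.joins (insert e S))) =>
      o.elim (c (G.tgt e)) (Quot.lift merge hmerge) := by
    intro q
    obtain ⟨v, rfl⟩ := Quot.exists_rep q
    by_cases hv : c v = c (G.tgt e)
    · exact ⟨none, hv.symm⟩
    · exact ⟨some (Quot.mk _ v), if_neg hv⟩
  simpa [numComponents, Finite.card_option] using Nat.card_le_card_of_surjective _ hsurj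

theorem numComponents_insert_lt {S : Finset G.E} {e : G.E} (p : G.V → Prop)
    (hp : ∀ f ∈ S, (p (G.src f) ↔ p (G.tgt f))) (he : ¬(p (G.src e) ↔ p (G.tgt e))) :
    G.numComponents (insert e S) < G.numComponents S := by
  let proj : Quot (G.joins S) → Quot (G.joins (insert e S)) :=
    Quot.map id fun _ _ ⟨f, hf, h⟩ => ⟨f, mem_insert_of_mem hf, h⟩
  have hsurj : Function.Surjective proj :=
    Function.Surjective.of_comp (g := Quot.mk _) Quot.mk_surjective
  have hninj : ¬Function.Injective proj := by
    intro hinj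
    have hends : Quot.mk (G.joins S) (G.src e) = Quot.mk _ (G.tgt e) :=
      hinj (Quot.sound ⟨e, mem_insert_self .., rfl, rfl⟩)
    have hlift : ∀ u v, G.joins S u v → p u = p v := by
      rintro u v ⟨f, hf, rfl, rfl⟩
      exact propext (hp f hf)
    exact he (congrArg (Quot.lift p hlift) hends).to_iff
  refine lt_of_le_of_ne (Nat.card_le_card_of_surjective proj hsurj) fun hcard => hninj ?_
  exact ((Nat.bijective_iff_surjective_and_card proj).2 ⟨hsurj, hcard.symm⟩).1

theorem ConnOn.numComponents_le_one {S : Finset G.E} (hS : G.ConnOn S) :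
    G.numComponents S ≤ 1 := by
  refine Finite.card_le_one_iff_subsingleton.2 ⟨fun q q' => ?_⟩
  obtain ⟨u, rfl⟩ := Quot.exists_rep q
  obtain ⟨v, rfl⟩ := Quot.exists_rep q'
  refine connOn_iff_forall_invariant.1 hS (fun x => Quot.mk (G.joins S) u = Quot.mk _ x)
    (fun e he => ?_) u v rfl
  rw [Quot.sound (r := G.joins S) ⟨e, he, rfl, rfl⟩]

theorem monotone_numComponents_add_card :
    Monotone fun S : Finset G.E => G.numComponents S + #S := by
  refine Finset.monotone_iff_forall_le_insert.2 fun S e he => ?_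
  have := numComponents_le_numComponents_insert_add_one S e
  simp only [card_insert_of_notMem he]
  omega

theorem nV_le_numComponents_add_card (S : Finset G.E) : G.nV ≤ G.numComponents S + #S := by
  simpa [numComponents_empty] using monotone_numComponents_add_card (empty_subset S)

theorem IsForest.mono {S S' : Finset G.E} (hS' : G.IsForest S') (h : S ⊆ S') : G.IsForest S :=
  ((monotone_numComponents_add_card h).trans_eq hS').antisymm (nV_le_numComponents_add_card S)

theorem IsForest.exists_superset_connOn {Z : Finset G.E} (hZ : G.IsForest Z)
    (hG : G.Connected) : ∃ S, Z ⊆ S ∧ G.IsForest S ∧ G.ConnOn S := by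
  obtain ⟨S, hZS, hS⟩ := Finite.exists_le_maximal hZ
  refine ⟨S, hZS, hS.prop, connOn_iff_forall_invariant.2 fun p hp u v hu => ?_⟩
  by_contra hv
  obtain ⟨e, he⟩ : ∃ e, ¬(p (G.src e) ↔ p (G.tgt e)) := by
    by_contra! hinv
    exact hv (connOn_iff_forall_invariant.1 hG p (fun e _ => hinv e) u v hu)
  have heS : e ∉ S := fun h => he (hp e h)
  have hforest : G.IsForest (insert e S) := by
    have hle := nV_le_numComponents_add_card (insert e S)
    have hlt := numComponents_insert_lt p hp he
    have hcard := hS.prop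
    rw [IsForest] at hcard ⊢
    rw [card_insert_of_notMem heS] at hle ⊢
    omega
  exact heS (hS.le_of_ge hforest (subset_insert e S) (mem_insert_self e S))

/-- The sum of `∏ e ∈ T, w e` over the `i`-sets `T` of edges whose deletion leaves `D` connected,
that is, the `i`-sets coindependent in the cycle matroid. For `w = 1` it counts these sets. -/
def coindepSum (D : Multigraph) {R : Type*} [CommSemiring R] (i : ℕ) (w : D.E → R) : R :=
  ∑ T with #T = i ∧ D.ConnOn (univ \ T), ∏ e ∈ T, w e

variable {D : Multigraph} {w : D.E → ℕ}

@[simp, norm_cast]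
theorem natCast_coindepSum {R : Type*} [CommSemiring R] (i : ℕ) (w : D.E → ℕ) :
    ((D.coindepSum i w : ℕ) : R) = D.coindepSum i fun e => (w e : R) := by
  simp [coindepSum]

theorem coindepSum_pos_iff {i : ℕ} :
    0 < D.coindepSum i w ↔ ∃ T, #T = i ∧ D.ConnOn (univ \ T) ∧ ∀ e ∈ T, 0 < w e := by
  simp [coindepSum, sum_pos_iff, Nat.pos_iff_ne_zero, and_assoc]

theorem zeroAcyclic_iff_isForest : ZeroAcyclic D w ↔ D.IsForest {e | w e = 0} := by
  have hrel : zeroRel D w = D.joins {e | w e = 0} := by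
    ext u v
    simp [zeroRel, joins]
  rw [ZeroAcyclic, IsForest, numComponents, nV, ← hrel, Nat.card_eq_fintype_card]

theorem zeroAcyclic_iff_coindepSum_pos [Nonempty D.V] (hD : D.Connected) {i : ℕ}
    (hi : D.nE + 1 = D.nV + i) : ZeroAcyclic D w ↔ 0 < D.coindepSum i w := by
  rw [zeroAcyclic_iff_isForest, coindepSum_pos_iff]
  constructor
  · intro hZ
    obtain ⟨S, hZS, hforest, hS⟩ := hZ.exists_superset_connOn hD
    refine ⟨Sᶜ, ?_, by simpa [← compl_eq_univ_sdiff] using hS, fun e he => ?_⟩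
    · have hone : D.numComponents S = 1 := le_antisymm hS.numComponents_le_one <|
        Nat.card_pos_iff.2 ⟨‹Nonempty D.V›.map (Quot.mk _), inferInstance⟩
      have hcard : #S + #Sᶜ = D.nE := card_add_card_compl S
      rw [IsForest] at hforest
      omega
    · exact Nat.pos_of_ne_zero fun h0 => mem_compl.1 he (hZS (by simpa using h0))
  · rintro ⟨T, hT, hconn, hpos⟩
    have hforest : D.IsForest (univ \ T) := by
      have hle := nV_le_numComponents_add_card (univ \ T)
      have hone := hconn.numComponents_le_one
      have hcard : #(univ \ T) + #T = D.nE := card_sdiff_add_card_eq_card (subset_univ T)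
      rw [IsForest]
      omega
    refine hforest.mono fun e he => mem_sdiff.2 ⟨mem_univ e, fun heT => ?_⟩
    exact (hpos e heT).ne' (mem_filter.1 he).2

end Multigraph

section Fiberwise

variable {α ι : Type*} (π : α → ι)

theorem sum_prod_fiberwise [Fintype α] [Fintype ι] {R : Type*} [CommSemiring R]
    (f : ι → Finset α → R) :
    ∑ T : Finset α, ∏ i, f i {x ∈ T | π x = i} =
      ∏ i, ∑ X ∈ powerset {x | π x = i}, f i X := by
  rw [prod_univ_sum]
  refine sum_nbij' (fun T i => {x ∈ T | π x = i}) (fun A => univ.filter fun x => x ∈ A (π x))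
    ?_ ?_ ?_ ?_ ?_
  · intro T _
    simp only [Fintype.mem_piFinset, mem_powerset]
    exact fun i => filter_subset_filter _ (subset_univ T)
  · exact fun A _ => mem_univ _
  · intro T _
    ext x
    simp
  · intro A hA
    ext i x
    have hAi : x ∈ A i → π x = i := fun hx =>
      (mem_filter.1 (mem_powerset.1 (Fintype.mem_piFinset.1 hA i) hx)).2
    simp only [mem_filter, mem_univ, true_and]
    exact ⟨fun ⟨hx, h⟩ => h ▸ hx, fun hx => ⟨hAi hx ▸ hx, hAi hx⟩⟩
  · exact fun T _ => rfl

variable {π} in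
theorem injOn_and_image_eq_iff_forall_card {F : Finset α} {T : Finset ι} :
    Set.InjOn π F ∧ F.image π = T ↔ ∀ i, #{x ∈ F | π x = i} = if i ∈ T then 1 else 0 := by
  constructor
  · rintro ⟨hinj, rfl⟩ i
    split_ifs with hi
    · obtain ⟨x, hx, rfl⟩ := mem_image.1 hi
      refine card_eq_one.2 ⟨x, ext fun y => ?_⟩
      simp only [mem_filter, mem_singleton]
      exact ⟨fun ⟨hy, hyx⟩ => hinj hy hx hyx, fun h => ⟨h ▸ hx, h ▸ rfl⟩⟩
    · exact card_eq_zero.2 (filter_eq_empty_iff.2 fun x hx h => hi (mem_image.2 ⟨x, hx, h⟩))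
  · intro h
    constructor
    · intro x hx y hy hxy
      have hle : #{z ∈ F | π z = π y} ≤ 1 := by rw [h]; split_ifs <;> simp
      exact card_le_one.1 hle x (mem_filter.2 ⟨hx, hxy⟩) y (mem_filter.2 ⟨hy, rfl⟩)
    · ext i
      have hpos : i ∈ F.image π ↔ 0 < #{x ∈ F | π x = i} := by
        simp [card_pos, Finset.Nonempty]
      rw [hpos, h]
      split_ifs with hi <;> simp [hi]

theorem card_filter_injOn_and_image_eq [Fintype α] [Finite ι] (T : Finset ι) :
    #{F : Finset α | Set.InjOn π F ∧ F.image π = T} = ∏ i ∈ T, #{x | π x = i} := by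
  cases nonempty_fintype ι
  have hfactor : ∀ F : Finset α, (if Set.InjOn π F ∧ F.image π = T then 1 else 0 : ℕ) =
      ∏ i, if #{x ∈ F | π x = i} = (if i ∈ T then 1 else 0) then 1 else 0 := fun F => by
    simp [injOn_and_image_eq_iff_forall_card, prod_ite_zero]
  have hfiber : ∀ i, (∑ X ∈ powerset {x | π x = i},
      if #X = (if i ∈ T then 1 else 0) then 1 else 0) = if i ∈ T then #{x | π x = i} else 1 :=
    fun i => by
      rw [← card_filter, ← powersetCard_eq_filter, card_powersetCard]
      split_ifs <;> simp
  rw [card_filter]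
  simp_rw [hfactor]
  rw [sum_prod_fiberwise π fun i X => if #X = (if i ∈ T then 1 else 0) then 1 else 0]
  simp_rw [hfiber, prod_ite_mem, univ_inter]

end Fiberwise

namespace Multigraph

theorem d_add_coindepSum_one (G : Multigraph) (i : ℕ) :
    G.d i + G.coindepSum i 1 = G.nE.choose i := by
  have hcount : G.coindepSum i 1 =
      #{F ∈ powersetCard i (univ : Finset G.E) | ¬G.Disconnects F} := by
    rw [powersetCard_eq_filter, filter_filter, powerset_univ]
    simp [coindepSum, Disconnects]
  have hd : G.d i = #{F ∈ powersetCard i (univ : Finset G.E) | G.Disconnects F} := by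
    rw [powersetCard_eq_filter, filter_filter, powerset_univ, d]
  rw [hd, hcount, card_filter_add_card_filter_not, card_powersetCard, card_univ, nE]

variable {D : Multigraph} {w : D.E → ℕ}

theorem nE_subdivide : (subdivide D w).nE = ∑ e, w e :=
  (Fintype.card_sigma (α := fun e => Fin (w e))).trans (by simp)

theorem chainNode_zero (e : D.E) : chainNode D w e 0 = .inl (Quot.mk _ (D.src e)) := by
  simp [chainNode]

theorem chainNode_self (e : D.E) : chainNode D w e (w e) = .inl (Quot.mk _ (D.tgt e)) := by
  obtain h | h := eq_or_ne (w e) 0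
  · rw [h, chainNode_zero, Quot.sound (r := zeroRel D w) ⟨e, h, rfl, rfl⟩]
  · simp [chainNode, h]

theorem chainNode_add_one (e : D.E) (i : Fin (w e - 1)) :
    chainNode D w e (i + 1) = .inr ⟨e, i⟩ := by
  have : (i : ℕ) + 1 < w e := by omega
  simp [chainNode, this]

theorem exists_extend_to_chains {h : D.V → Prop} {g : D.E → ℕ → Prop}
    (hsrc : ∀ e, g e 0 ↔ h (D.src e)) (htgt : ∀ e, g e (w e) ↔ h (D.tgt e)) :
    ∃ p : (subdivide D w).V → Prop, (∀ v, p (.inl (Quot.mk _ v)) ↔ h v) ∧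
      ∀ e, ∀ j ≤ w e, (p (chainNode D w e j) ↔ g e j) := by
  have hzero : ∀ u v, zeroRel D w u v → h u = h v := by
    rintro u v ⟨e, he, rfl, rfl⟩
    exact propext ((hsrc e).symm.trans (he ▸ htgt e))
  refine ⟨Sum.elim (Quot.lift h hzero) fun x => g x.1 (x.2 + 1), fun v => .rfl, fun e j hj => ?_⟩
  obtain rfl | hj0 := Nat.eq_zero_or_pos j
  · rw [chainNode_zero]
    exact (hsrc e).symm
  · obtain rfl | hjw := hj.eq_or_lt
    · rw [chainNode_self]
      exact (htgt e).symm
    · obtain ⟨i, rfl⟩ : ∃ i, j = i + 1 := ⟨j - 1, by omega⟩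
      rw [chainNode_add_one e ⟨i, by omega⟩]
      rfl

theorem subdivide_connOn_iff_forall_invariant {F : Finset (Σ e : D.E, Fin (w e))} :
    (subdivide D w).ConnOn (univ \ F : Finset (subdivide D w).E) ↔
      ∀ p : (subdivide D w).V → Prop,
        (∀ (e : D.E) (k : Fin (w e)), ⟨e, k⟩ ∉ F →
          (p (chainNode D w e k) ↔ p (chainNode D w e (k + 1)))) → ∀ u v, p u → p v := by
  rw [connOn_iff_forall_invariant]
  refine forall_congr' fun p => imp_congr_left ⟨fun hp e k hk => ?_, fun hp x hx => ?_⟩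
  · exact hp ⟨e, k⟩ (mem_sdiff.2 ⟨mem_univ _, hk⟩)
  · exact hp x.1 x.2 (mem_sdiff.1 hx).2

theorem injOn_fst_of_subdivide_connOn {F : Finset (Σ e : D.E, Fin (w e))}
    (hF : (subdivide D w).ConnOn (univ \ F : Finset (subdivide D w).E)) :
    Set.InjOn Sigma.fst (F : Set (Σ e : D.E, Fin (w e))) := by
  -- The part of a chain strictly between two removed edges is separated from the rest.
  have hle : ∀ (e : D.E) (k l : Fin (w e)), ⟨e, k⟩ ∈ F → ⟨e, l⟩ ∈ F → l ≤ k := by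
    intro e k l hk hl
    by_contra! hkl
    obtain ⟨p, -, hp⟩ := exists_extend_to_chains (D := D) (w := w) (h := fun _ => False)
      (g := fun e' j => e' = e ∧ k.val < j ∧ j ≤ l) (by simp)
      (fun e' => iff_false_intro <| by rintro ⟨rfl, -, h⟩; exact absurd l.2 h.not_gt)
    have hnot : ¬p (chainNode D w e k) := by simp [hp e k k.2.le]
    refine hnot (subdivide_connOn_iff_forall_invariant.1 hF p (fun e' i hi => ?_) _ _
      ((hp e l l.2.le).2 ⟨rfl, hkl, le_rfl⟩))
    rw [hp _ _ i.2.le, hp _ _ i.2]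
    refine and_congr_right ?_
    rintro rfl
    have hik : i.val ≠ k := fun h => hi (Fin.ext h ▸ hk)
    have hil : i.val ≠ l := fun h => hi (Fin.ext h ▸ hl)
    omega
  rintro ⟨e, k⟩ hk ⟨_, l⟩ hl rfl
  rw [le_antisymm (hle e l k hl hk) (hle e k l hk hl)]

theorem connOn_of_subdivide_connOn {F : Finset (Σ e : D.E, Fin (w e))}
    (hF : (subdivide D w).ConnOn (univ \ F : Finset (subdivide D w).E)) :
    D.ConnOn (univ \ F.image Sigma.fst) := by
  refine connOn_iff_forall_invariant.2 fun h hh u v hu => ?_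
  have hkeep : ∀ e, (¬∃ k : Fin (w e), ⟨e, k⟩ ∈ F) → (h (D.src e) ↔ h (D.tgt e)) := fun e he =>
    hh e (by simpa using he)
  -- Along each chain the value changes at most once, at a removed edge.
  obtain ⟨p, hpv, hp⟩ := exists_extend_to_chains (D := D) (w := w) (h := h)
    (g := fun e j => if ∃ k : Fin (w e), k.val < j ∧ ⟨e, k⟩ ∈ F then h (D.tgt e) else h (D.src e))
    (by simp) (fun e => by
      split_ifs with he
      · rfl
      · exact hkeep e fun ⟨k, hk⟩ => he ⟨k, k.2, hk⟩)
  refine (hpv v).1 (subdivide_connOn_iff_forall_invariant.1 hF p (fun e i hi => ?_) _ _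
    ((hpv u).2 hu))
  rw [hp _ _ i.2.le, hp _ _ i.2]
  have hiff : (∃ k : Fin (w e), k.val < i ∧ ⟨e, k⟩ ∈ F) ↔
      ∃ k : Fin (w e), k.val < i + 1 ∧ ⟨e, k⟩ ∈ F := by
    refine exists_congr fun k => and_congr_left fun hk => ?_
    have hki : k.val ≠ i := fun h => hi (Fin.ext h ▸ hk)
    omega
  simp only [hiff]

theorem iff_chainNode_of_forall_notMem {F : Finset (Σ e : D.E, Fin (w e))}
    {p : (subdivide D w).V → Prop}
    (hp : ∀ (e : D.E) (k : Fin (w e)), ⟨e, k⟩ ∉ F →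
      (p (chainNode D w e k) ↔ p (chainNode D w e (k + 1))))
    {e : D.E} {a b : ℕ} (hab : a ≤ b) (hb : b ≤ w e)
    (hF : ∀ k : Fin (w e), a ≤ k.val → k.val < b → ⟨e, k⟩ ∉ F) :
    p (chainNode D w e a) ↔ p (chainNode D w e b) := by
  induction b, hab using Nat.le_induction with
  | base => rfl
  | succ b hab ih =>
    rw [ih (by omega) fun k hak hkb => hF k hak (by omega)]
    exact hp e ⟨b, hb⟩ (hF ⟨b, hb⟩ hab b.lt_succ_self)

theorem subdivide_connOn {F : Finset (Σ e : D.E, Fin (w e))}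
    (hinj : Set.InjOn Sigma.fst (F : Set (Σ e : D.E, Fin (w e))))
    (hD : D.ConnOn (univ \ F.image Sigma.fst)) :
    (subdivide D w).ConnOn (univ \ F : Finset (subdivide D w).E) := by
  refine subdivide_connOn_iff_forall_invariant.2 fun p hp => ?_
  have hbase : ∀ u v, p (.inl (Quot.mk _ u)) → p (.inl (Quot.mk _ v)) := by
    refine connOn_iff_forall_invariant.1 hD (fun v => p (.inl (Quot.mk _ v))) fun e he => ?_
    rw [← chainNode_zero, ← chainNode_self]
    refine iff_chainNode_of_forall_notMem hp (w e).zero_le le_rfl fun k _ _ hk => ?_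
    exact (mem_sdiff.1 he).2 (mem_image_of_mem Sigma.fst hk)
  have hrep : ∀ x, ∃ v, p x ↔ p (.inl (Quot.mk _ v)) := by
    rintro (q | ⟨e, i⟩)
    · obtain ⟨v, rfl⟩ := Quot.exists_rep q
      exact ⟨v, .rfl⟩
    · have hi := i.2
      rw [← chainNode_add_one]
      by_cases hx : ∃ k : Fin (w e), k.val < i + 1 ∧ ⟨e, k⟩ ∈ F
      · obtain ⟨k, hki, hk⟩ := hx
        refine ⟨D.tgt e, ?_⟩
        rw [← chainNode_self]
        refine iff_chainNode_of_forall_notMem hp (by omega) le_rfl fun l hil _ hl => ?_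
        obtain rfl : k = l := by simpa using hinj hk hl rfl
        omega
      · refine ⟨D.src e, ?_⟩
        rw [← chainNode_zero]
        exact (iff_chainNode_of_forall_notMem hp (Nat.zero_le _) (by omega)
          fun k _ hki hk => hx ⟨k, hki, hk⟩).symm
  intro u v hu
  obtain ⟨u', hu'⟩ := hrep u
  obtain ⟨v', hv'⟩ := hrep v
  exact hv'.2 (hbase u' v' (hu'.1 hu))

theorem subdivide_connOn_iff {F : Finset (Σ e : D.E, Fin (w e))} :
    (subdivide D w).ConnOn (univ \ F : Finset (subdivide D w).E) ↔
      Set.InjOn Sigma.fst (F : Set (Σ e : D.E, Fin (w e))) ∧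
        D.ConnOn (univ \ F.image Sigma.fst) :=
  ⟨fun hF => ⟨injOn_fst_of_subdivide_connOn hF, connOn_of_subdivide_connOn hF⟩,
    fun ⟨hinj, hD⟩ => subdivide_connOn hinj hD⟩

theorem card_filter_fst_eq (e : D.E) : #{x : Σ e : D.E, Fin (w e) | x.1 = e} = w e := by
  have hfiber : (univ.filter fun x : Σ e : D.E, Fin (w e) => x.1 = e) = univ.map (.sigmaMk e) := by
    ext ⟨e', k⟩
    simp only [mem_filter, mem_univ, true_and, mem_map, Function.Embedding.sigmaMk_apply]
    exact ⟨by rintro rfl; exact ⟨k, rfl⟩, fun ⟨_, h⟩ => (congrArg Sigma.fst h).symm⟩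
  rw [hfiber, card_map, card_univ, Fintype.card_fin]

theorem coindepSum_subdivide_one (i : ℕ) :
    (subdivide D w).coindepSum i 1 = D.coindepSum i w := by
  have hcard : (subdivide D w).coindepSum i 1 = #{F : Finset (Σ e : D.E, Fin (w e)) |
      #F = i ∧ (subdivide D w).ConnOn (univ \ F : Finset (subdivide D w).E)} := by
    simp only [coindepSum, Pi.one_apply, prod_const_one, sum_const, smul_eq_mul, mul_one]
    rfl
  have himage : ∀ F ∈ ({F | #F = i ∧ (subdivide D w).ConnOn (univ \ F :
      Finset (subdivide D w).E)} : Finset (Finset (Σ e : D.E, Fin (w e)))),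
      F.image Sigma.fst ∈ ({T | #T = i ∧ D.ConnOn (univ \ T)} : Finset (Finset D.E)) := by
    intro F hF
    obtain ⟨hFi, hF⟩ := (mem_filter.1 hF).2
    obtain ⟨hinj, hD⟩ := subdivide_connOn_iff.1 hF
    simpa [card_image_of_injOn hinj, hFi] using hD
  rw [hcard, card_eq_sum_card_fiberwise himage, coindepSum]
  refine sum_congr rfl fun T hT => ?_
  obtain ⟨hTi, hT⟩ := (mem_filter.1 hT).2
  calc _ = #{F : Finset (Σ e : D.E, Fin (w e)) | Set.InjOn Sigma.fst
        (F : Set (Σ e : D.E, Fin (w e))) ∧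
        F.image Sigma.fst = T} := by
        rw [filter_filter]
        refine congrArg card (filter_congr fun F _ => ?_)
        rw [subdivide_connOn_iff]
        constructor
        · exact fun ⟨⟨_, hinj, _⟩, h⟩ => ⟨hinj, h⟩
        · rintro ⟨hinj, rfl⟩
          exact ⟨⟨card_image_of_injOn hinj ▸ hTi, hinj, hT⟩, rfl⟩
    _ = ∏ e ∈ T, w e := by
        rw [card_filter_injOn_and_image_eq]
        simp only [card_filter_fst_eq]

theorem d_subdivide_add_coindepSum (i : ℕ) :
    (subdivide D w).d i + D.coindepSum i w = (∑ e, w e).choose i := by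
  rw [← coindepSum_subdivide_one, d_add_coindepSum_one, nE_subdivide]

end Multigraph

namespace MGIso

variable {G H : Multigraph} (φ : MGIso G H)

theorem connOn_map_iff {S : Finset G.E} :
    H.ConnOn (S.map φ.eMap.toEmbedding) ↔ G.ConnOn S := by
  have hends : ∀ (p : H.V → Prop) (e : G.E),
      (p (H.src (φ.eMap e)) ↔ p (H.tgt (φ.eMap e))) ↔
        (p (φ.vMap (G.src e)) ↔ p (φ.vMap (G.tgt e))) := by
    intro p e
    obtain ⟨hsrc, htgt⟩ | ⟨hsrc, htgt⟩ := φ.ends_eq e <;> rw [hsrc, htgt]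
    exact iff_comm
  have hcomp : Function.Surjective fun p : H.V → Prop => p ∘ φ.vMap :=
    φ.vMap.injective.surjective_comp_right
  simp only [Multigraph.connOn_iff_forall_invariant, hcomp.forall, φ.vMap.surjective.forall,
    forall_mem_map, Equiv.coe_toEmbedding, hends, Function.comp_apply]

theorem coindepSum_comp {R : Type*} [CommSemiring R] (i : ℕ) (w : H.E → R) :
    G.coindepSum i (w ∘ φ.eMap) = H.coindepSum i w := by
  refine sum_equiv φ.eMap.finsetCongr (fun T => ?_) fun T _ => by simp
  have hsdiff : univ \ T.map φ.eMap.toEmbedding = (univ \ T).map φ.eMap.toEmbedding := by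
    rw [Finset.map_sdiff, map_univ_equiv]
  simp [hsdiff, connOn_map_iff]

theorem d_eq (φ : MGIso G H) (i : ℕ) : G.d i = H.d i := by
  have hG := G.d_add_coindepSum_one i
  have hH := H.d_add_coindepSum_one i
  have hnE : G.nE = H.nE := Fintype.card_congr φ.eMap
  have hcoindep : G.coindepSum i 1 = H.coindepSum i (1 : H.E → ℕ) := φ.coindepSum_comp i 1
  rw [hnE] at hG
  omega

theorem adjEdges {a b : G.E} (h : AdjEdges G a b) : AdjEdges H (φ.eMap a) (φ.eMap b) := by
  have hends : ∀ e v, G.src e = v ∨ G.tgt e = v →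
      H.src (φ.eMap e) = φ.vMap v ∨ H.tgt (φ.eMap e) = φ.vMap v := by
    rintro e v (rfl | rfl) <;> obtain ⟨hsrc, htgt⟩ | ⟨hsrc, htgt⟩ := φ.ends_eq e <;> simp [*]
  obtain ⟨v, ha, hb⟩ := h
  exact ⟨φ.vMap v, hends a v ha, hends b v hb⟩

end MGIso

theorem moveWeight_comp {E E' : Type} (f : E ≃ E') (w : E' → ℕ) (a b : E) :
    moveWeight (w ∘ f) a b = moveWeight w (f a) (f b) ∘ f := by
  ext e
  simp [moveWeight]

theorem sum_moveWeight {E : Type} [Fintype E] {w : E → ℕ} {a b : E} (hab : a ≠ b)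
    (ha : 0 < w a) : ∑ e, moveWeight w a b e = ∑ e, w e := by
  have hmove : ∀ e, moveWeight w a b e + (if e = a then 1 else 0) =
      w e + if e = b then 1 else 0 := by
    intro e
    unfold moveWeight
    split_ifs <;> grind
  simpa [sum_add_distrib] using sum_congr rfl fun e (_ : e ∈ univ) => hmove e

/-- Moving an edge from the chain `a` to the adjacent chain `b` does not decrease the number of
`2`-sets of edges of `subdivide D w` that are not disconnections, and increases the numbers of such
`3`-sets and `4`-sets. -/
structure IsImprovingMove (D : Multigraph) (w : D.E → ℕ) (a b : D.E) : Prop where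
  ne : a ≠ b
  adjEdges : AdjEdges D a b
  pos : 0 < w a
  two : D.coindepSum 2 w ≤ D.coindepSum 2 (moveWeight w a b)
  three : D.coindepSum 3 w < D.coindepSum 3 (moveWeight w a b)
  four : D.coindepSum 4 w < D.coindepSum 4 (moveWeight w a b)

namespace IsImprovingMove

variable {D : Multigraph} {w : D.E → ℕ} {a b : D.E}

theorem map {D' : Multigraph} {w : D'.E → ℕ} (φ : MGIso D D')
    (h : IsImprovingMove D (w ∘ φ.eMap) a b) : IsImprovingMove D' w (φ.eMap a) (φ.eMap b) where
  ne := φ.eMap.injective.ne h.ne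
  adjEdges := φ.adjEdges h.adjEdges
  pos := h.pos
  two := by simpa only [moveWeight_comp, φ.coindepSum_comp] using h.two
  three := by simpa only [moveWeight_comp, φ.coindepSum_comp] using h.three
  four := by simpa only [moveWeight_comp, φ.coindepSum_comp] using h.four

theorem d_add_coindepSum_eq (h : IsImprovingMove D w a b) (i : ℕ) :
    (subdivide D (moveWeight w a b)).d i + D.coindepSum i (moveWeight w a b) =
      (subdivide D w).d i + D.coindepSum i w := by
  simp only [Multigraph.d_subdivide_add_coindepSum, sum_moveWeight h.ne h.pos]

end IsImprovingMove

theorem sum_finset_prod_rows {ι κ R : Type*} [Fintype ι] [Fintype κ]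
    [DecidableEq ι] [DecidableEq κ] [CommSemiring R] (w : ι × κ → R) (g : ι → Finset κ → R) :
    ∑ T : Finset (ι × κ), (∏ i, g i {c | (i, c) ∈ T}) * ∏ x ∈ T, w x =
      ∏ i, ∑ Y, g i Y * ∏ c ∈ Y, w (i, c) := by
  rw [Fintype.prod_sum]
  refine sum_nbij' (fun T i => {c | (i, c) ∈ T}) (fun A => univ.filter fun x => x.2 ∈ A x.1)
    (fun _ _ => mem_univ _) (fun _ _ => mem_univ _) (fun T _ => by ext; simp)
    (fun A _ => by ext; simp) fun T _ => ?_
  rw [prod_mul_distrib, prod_finset_product T univ (fun i => {c | (i, c) ∈ T}) (by simp)]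

theorem sum_finset_sum_prod_rows {α ι κ R : Type*} [Fintype ι] [Fintype κ] [DecidableEq ι]
    [DecidableEq κ] [CommSemiring R] (w : ι × κ → R) (s : Finset α) (g : α → ι → Finset κ → R) :
    ∑ T : Finset (ι × κ), (∑ a ∈ s, ∏ i, g a i {c | (i, c) ∈ T}) * ∏ x ∈ T, w x =
      ∑ a ∈ s, ∏ i, ∑ Y, g a i Y * ∏ c ∈ Y, w (i, c) := by
  simp only [sum_mul, sum_comm (t := s), sum_finset_prod_rows]

theorem sum_finset_fin_three {M : Type*} [AddCommMonoid M] (F : Finset (Fin 3) → M) :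
    ∑ Y, F Y = F ∅ + F {0} + F {1} + F {2} + F {0, 1} + F {0, 2} + F {1, 2} + F {0, 1, 2} := by
  have huniv : (univ : Finset (Finset (Fin 3))) =
    {∅, {0}, {1}, {2}, {0, 1}, {0, 2}, {1, 2}, {0, 1, 2}} := by decide
  rw [huniv]
  repeat rw [sum_insert (by decide)]
  rw [sum_singleton]
  abel

namespace Multigraph

theorem connOn_iff_forall_bool {G : Multigraph} {S : Finset G.E} :
    G.ConnOn S ↔ ∀ p : G.V → Bool, (∀ e ∈ S, p (G.src e) = p (G.tgt e)) → ∀ u v, p u = p v := by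
  rw [connOn_iff_forall_invariant]
  constructor
  · intro h p hp u v
    have htrue := h (fun x => p x = true) fun e he => by rw [hp e he]
    exact Bool.eq_iff_iff.2 ⟨htrue u v, htrue v u⟩
  · intro h p hp u v hu
    have heq := h (fun x => decide (p x)) (fun e he => decide_eq_decide.2 (hp e he)) u v
    exact (decide_eq_decide.1 heq).1 hu

theorem coindepSum_eq_sum_ite {D : Multigraph} {R : Type*} [CommSemiring R] {i : ℕ} {w : D.E → R}
    {P : Finset D.E → Prop} {_ : DecidablePred P} (hP : ∀ T, D.ConnOn (univ \ T) ↔ P T) :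
    D.coindepSum i w = ∑ T, (if #T = i ∧ P T then 1 else 0) * ∏ e ∈ T, w e := by
  simp [coindepSum, sum_filter, hP]

end Multigraph

/-- Deleting `T` leaves `K33` connected, expressed through Boolean colourings of the vertices so
that it is decidable by enumeration. -/
def K33ConnectedWithout (T : Finset (Fin 3 × Fin 3)) : Prop :=
  ∀ p : Fin 3 ⊕ Fin 3 → Bool, (∀ e ∉ T, p (.inl e.1) = p (.inr e.2)) → ∀ u v, p u = p v

instance : DecidablePred K33ConnectedWithout := fun T =>
  inferInstanceAs (Decidable (∀ p : Fin 3 ⊕ Fin 3 → Bool,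
    (∀ e ∉ T, p (.inl e.1) = p (.inr e.2)) → ∀ u v, p u = p v))

theorem K33_connOn_sdiff_iff {T : Finset (Fin 3 × Fin 3)} :
    K33.ConnOn (univ \ T : Finset K33.E) ↔ K33ConnectedWithout T := by
  rw [Multigraph.connOn_iff_forall_bool]
  refine forall_congr' fun p => imp_congr_left ⟨fun hp e he => ?_, fun hp e he => ?_⟩
  · exact hp e (mem_sdiff.2 ⟨mem_univ e, he⟩)
  · exact hp e (mem_sdiff.1 he).2

theorem K33_coindepSum_eq_sum_ite (i : ℕ) (w : Fin 3 × Fin 3 → ℤ) :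
    K33.coindepSum i w = ∑ T, (if #T = i ∧ K33ConnectedWithout T then 1 else 0) * ∏ e ∈ T, w e :=
  Multigraph.coindepSum_eq_sum_ite (D := K33) fun _ => K33_connOn_sdiff_iff

section RowSizes

variable (T : Finset (Fin 3 × Fin 3))

theorem ite_K33ConnectedWithout_two :
    (if #T = 2 ∧ K33ConnectedWithout T then 1 else 0 : ℤ) =
      (∑ i, ∏ j, if #{c | (j, c) ∈ T} = (if j = i then 2 else 0) then 1 else 0) +
      ∑ i, ∏ j, if #{c | (j, c) ∈ T} = (if j = i then 0 else 1) then 1 else 0 := by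
  revert T
  decide +kernel

/-- The last sum runs over the columns, that is, the stars of the vertices `Sum.inr c`. -/
theorem ite_K33ConnectedWithout_three :
    (if #T = 3 ∧ K33ConnectedWithout T then 1 else 0 : ℤ) =
      (∑ p : Fin 3 × Fin 3 with p.1 ≠ p.2, ∏ j, if #{c | (j, c) ∈ T} =
        (if j = p.1 then 2 else if j = p.2 then 1 else 0) then 1 else 0) +
      (∏ j, if #{c | (j, c) ∈ T} = 1 then 1 else 0) -
      ∑ c : Fin 3, ∏ j : Fin 3, if ({c | (j, c) ∈ T} : Finset (Fin 3)) = {c} then 1 else 0 := by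
  revert T
  decide +kernel

/-- The sets in the last sum either contain the column `p.2` or separate the edge `p` from the rest
of the graph. -/
theorem ite_K33ConnectedWithout_four :
    (if #T = 4 ∧ K33ConnectedWithout T then 1 else 0 : ℤ) =
      (∑ i, ∏ j, if #{c | (j, c) ∈ T} = (if j = i then 0 else 2) then 1 else 0) +
      (∑ i, ∏ j, if #{c | (j, c) ∈ T} = (if j = i then 2 else 1) then 1 else 0) -
      ∑ p : Fin 3 × Fin 3, ∏ j, if j = p.1 then (if #{c | (j, c) ∈ T} = 2 then 1 else 0)
        else if ({c | (j, c) ∈ T} : Finset (Fin 3)) = {p.2} then 1 else 0 := by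
  revert T
  decide +kernel

end RowSizes

/-- The second elementary symmetric polynomial in three entries. -/
def pairSum (r : Fin 3 → ℤ) : ℤ := r 0 * r 1 + r 0 * r 2 + r 1 * r 2

/-- The sum of the products of an entry of `r` and an entry of `s` at different positions; it is
the polarization of `pairSum`. -/
def crossSum (r s : Fin 3 → ℤ) : ℤ :=
  r 0 * (s 1 + s 2) + r 1 * (s 0 + s 2) + r 2 * (s 0 + s 1)

section Formulas

variable (M : Fin 3 → Fin 3 → ℤ)

theorem K33_coindepSum_two : K33.coindepSum 2 (Function.uncurry M) =
    pairSum (M 0) + pairSum (M 1) + pairSum (M 2) +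
      ((∑ c, M 0 c) * ∑ c, M 1 c) + ((∑ c, M 0 c) * ∑ c, M 2 c) +
      (∑ c, M 1 c) * ∑ c, M 2 c := by
  rw [K33_coindepSum_eq_sum_ite]
  simp only [ite_K33ConnectedWithout_two, add_mul, sum_add_distrib]
  rw [sum_finset_sum_prod_rows _ _ fun i j Y => if #Y = (if j = i then 2 else 0) then 1 else 0,
    sum_finset_sum_prod_rows _ _ fun i j Y => if #Y = (if j = i then 0 else 1) then 1 else 0]
  simp [sum_finset_fin_three, Fin.sum_univ_three, Fin.prod_univ_three, pairSum]
  ring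

theorem K33_coindepSum_three : K33.coindepSum 3 (Function.uncurry M) =
    pairSum (M 0) * (∑ c, M 1 c + ∑ c, M 2 c) + pairSum (M 1) * (∑ c, M 0 c + ∑ c, M 2 c) +
      pairSum (M 2) * (∑ c, M 0 c + ∑ c, M 1 c) +
      ((∑ c, M 0 c) * (∑ c, M 1 c) * ∑ c, M 2 c) - ∑ c, M 0 c * M 1 c * M 2 c := by
  rw [K33_coindepSum_eq_sum_ite]
  simp only [ite_K33ConnectedWithout_three, add_mul, sub_mul, sum_add_distrib, sum_sub_distrib]
  rw [sum_finset_sum_prod_rows _ _ fun (p : Fin 3 × Fin 3) j Y =>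
      if #Y = (if j = p.1 then 2 else if j = p.2 then 1 else 0) then 1 else 0,
    sum_finset_prod_rows _ fun _ Y => if #Y = 1 then 1 else 0,
    sum_finset_sum_prod_rows _ _ fun c _ Y => if Y = {c} then 1 else 0]
  have hpairs : (univ.filter fun p : Fin 3 × Fin 3 => p.1 ≠ p.2) =
    {(0, 1), (0, 2), (1, 0), (1, 2), (2, 0), (2, 1)} := by decide
  simp [hpairs, sum_finset_fin_three, Fin.sum_univ_three, Fin.prod_univ_three, pairSum]
  ring

theorem K33_coindepSum_four : K33.coindepSum 4 (Function.uncurry M) =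
    pairSum (M 0) * pairSum (M 1) + pairSum (M 0) * pairSum (M 2) + pairSum (M 1) * pairSum (M 2) +
      pairSum (M 0) * crossSum (M 1) (M 2) + pairSum (M 1) * crossSum (M 0) (M 2) +
      pairSum (M 2) * crossSum (M 0) (M 1) := by
  rw [K33_coindepSum_eq_sum_ite]
  simp only [ite_K33ConnectedWithout_four, add_mul, sub_mul, sum_add_distrib, sum_sub_distrib]
  rw [sum_finset_sum_prod_rows _ _ fun i j Y => if #Y = (if j = i then 0 else 2) then 1 else 0,
    sum_finset_sum_prod_rows _ _ fun i j Y => if #Y = (if j = i then 2 else 1) then 1 else 0,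
    sum_finset_sum_prod_rows _ _ fun (p : Fin 3 × Fin 3) j Y =>
      if j = p.1 then (if #Y = 2 then 1 else 0) else if Y = {p.2} then 1 else 0]
  simp [Fintype.sum_prod_type, sum_finset_fin_three, Fin.sum_univ_three, Fin.prod_univ_three,
    pairSum, crossSum]
  ring

end Formulas

theorem pairSum_nonneg {r : Fin 3 → ℤ} (hr : 0 ≤ r) : 0 ≤ pairSum r := by
  have h0 := hr 0; have h1 := hr 1; have h2 := hr 2
  simp only [Pi.zero_apply] at h0 h1 h2
  unfold pairSum
  positivity

theorem crossSum_nonneg {r s : Fin 3 → ℤ} (hr : 0 ≤ r) (hs : 0 ≤ s) : 0 ≤ crossSum r s := by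
  have h0 := hr 0; have h1 := hr 1; have h2 := hr 2
  have h0' := hs 0; have h1' := hs 1; have h2' := hs 2
  simp only [Pi.zero_apply] at h0 h1 h2 h0' h1' h2'
  unfold crossSum
  positivity

theorem crossSum_comm (r s : Fin 3 → ℤ) : crossSum r s = crossSum s r := by
  unfold crossSum
  ring

theorem pairSum_add (r s : Fin 3 → ℤ) :
    pairSum (r + s) = pairSum r + pairSum s + crossSum r s := by
  simp only [pairSum, crossSum, Pi.add_apply]
  ring

theorem pairSum_sub (r s : Fin 3 → ℤ) :
    pairSum (s - r) = pairSum r + pairSum s - crossSum r s := by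
  simp only [pairSum, crossSum, Pi.sub_apply]
  ring

theorem pairSum_eq_neg_sq {δ : Fin 3 → ℤ} {i k : Fin 3} (hik : i ≠ k) (h : δ k = -δ i) :
    pairSum δ = -δ i ^ 2 := by
  fin_cases i <;> fin_cases k <;> simp_all [pairSum] <;> ring

/-- The automorphism of `K33` permuting the two sides of the bipartition separately. -/
def MGIso.permK33 (ρ σ : Equiv.Perm (Fin 3)) : MGIso K33 K33 where
  vMap := Equiv.sumCongr ρ σ
  eMap := Equiv.prodCongr ρ σ
  ends_eq _ := Or.inl ⟨rfl, rfl⟩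

/-- The automorphism of `K33` exchanging the two sides of the bipartition. -/
def MGIso.swapK33 : MGIso K33 K33 where
  vMap := Equiv.sumComm _ _
  eMap := Equiv.prodComm _ _
  ends_eq _ := Or.inr ⟨rfl, rfl⟩

theorem exists_perm_fin_three {a b : Fin 3} (h : a ≠ b) :
    ∃ ρ : Equiv.Perm (Fin 3), ρ 0 = a ∧ ρ 1 = b := by
  revert a b
  decide

/-- The increase of `K33.coindepSum 4` when an edge is moved between the first two chains of a row
whose first entry exceeds its second by `d`, the two other rows being `r` and `s`. -/
def gainFour (d : ℤ) (r s : Fin 3 → ℤ) : ℤ :=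
  (d - 1) * pairSum (r + s) - (s 1 - s 0) * pairSum r - (r 1 - r 0) * pairSum s

/-- The increase of `K33.coindepSum 3` in the situation of `gainFour`. -/
def gainThree (d : ℤ) (r s : Fin 3 → ℤ) : ℤ :=
  (d - 1) * (∑ c, r c + ∑ c, s c) + r 0 * s 0 - r 1 * s 1

section Gains

variable {d : ℤ} {r s : Fin 3 → ℤ}

theorem pairSum_mul_le_crossSum_mul_sum (hr : 0 ≤ r) (hs : 0 ≤ s) (c : Fin 3) :
    pairSum r * s c ≤ crossSum r s * ∑ i, r i := by
  have hr' : ∀ i, 0 ≤ r i := hr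
  have hs' : ∀ i, 0 ≤ s i := hs
  rw [Fin.sum_univ_three, ← sub_nonneg]
  have := hr' 0; have := hr' 1; have := hr' 2
  have := hs' 0; have := hs' 1; have := hs' 2
  fin_cases c <;> simp only [pairSum, crossSum, Fin.zero_eta, Fin.mk_one, Fin.reduceFinMk] <;>
    ring_nf <;> positivity

theorem eq_zero_of_crossSum_eq_zero (hr : 0 ≤ r) (hs : 0 ≤ s) (hcross : crossSum r s = 0)
    (hpos : 0 < pairSum r) : s = 0 := by
  funext c
  have hle := pairSum_mul_le_crossSum_mul_sum hr hs c
  rw [hcross, zero_mul] at hle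
  exact le_antisymm (nonpos_of_mul_nonpos_right hle hpos) (hs c)

theorem pairSum_le_sum_sq (hr : 0 ≤ r) : pairSum r ≤ (∑ c, r c) ^ 2 := by
  have hr' : ∀ i, 0 ≤ r i := hr
  rw [Fin.sum_univ_three, ← sub_nonneg]
  have := hr' 0; have := hr' 1; have := hr' 2
  simp only [pairSum]
  ring_nf
  positivity

theorem two_mul_gainThree : 2 * gainThree d r s = 2 * (d - 1) * ∑ c, (r + s) c -
    (s 1 - s 0) * (r 0 + r 1) - (r 1 - r 0) * (s 0 + s 1) := by
  simp only [gainThree, Fin.sum_univ_three, Pi.add_apply]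
  ring

theorem gainThree_pos_of_unopposed (hr : 0 ≤ r) (hs : 0 ≤ s) (hd : 2 ≤ d) (hrd : r 1 - r 0 < d)
    (hsd : s 1 - s 0 < d) (hpos : 0 < pairSum (r + s)) : 0 < gainThree d r s := by
  have hr' : ∀ i, 0 ≤ r i := hr
  have hs' : ∀ i, 0 ≤ s i := hs
  have hd' : 0 < d - 1 := by linarith
  have hsum : 0 < (d - 1) * ∑ c, (r + s) c := by
    refine mul_pos hd' ((sum_nonneg fun c _ => (add_nonneg hr hs) c).lt_of_ne' fun h => ?_)
    exact absurd (pairSum_le_sum_sq (add_nonneg hr hs)) (by rw [h]; simpa using hpos)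
  have hrow : (s 1 - s 0) * (r 0 + r 1) ≤ (d - 1) * (r 0 + r 1) :=
    mul_le_mul_of_nonneg_right (by linarith) (add_nonneg (hr' 0) (hr' 1))
  have hrow' : (r 1 - r 0) * (s 0 + s 1) ≤ (d - 1) * (s 0 + s 1) :=
    mul_le_mul_of_nonneg_right (by linarith) (add_nonneg (hs' 0) (hs' 1))
  have hlast : 0 ≤ (d - 1) * (r 2 + s 2) := mul_nonneg hd'.le (add_nonneg (hr' 2) (hs' 2))
  have hgain := two_mul_gainThree (d := d) (r := r) (s := s)
  simp only [Fin.sum_univ_three, Pi.add_apply] at hsum hgain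
  linarith

theorem gainFour_pos_of_unopposed (hr : 0 ≤ r) (hs : 0 ≤ s) (hd : 2 ≤ d) (hrd : r 1 - r 0 < d)
    (hsd : s 1 - s 0 < d) (hpos : 0 < pairSum (r + s)) : 0 < gainFour d r s := by
  have hgain : gainFour d r s = (d - 1) * crossSum r s + (d - 1 - (s 1 - s 0)) * pairSum r +
      (d - 1 - (r 1 - r 0)) * pairSum s := by
    rw [gainFour, pairSum_add]
    ring
  rw [pairSum_add] at hpos
  have hr0 := pairSum_nonneg hr
  have hs0 := pairSum_nonneg hs
  obtain hcross | hcross := (crossSum_nonneg hr hs).lt_or_eq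
  · have := mul_pos (by linarith : 0 < d - 1) hcross
    have := mul_nonneg (by linarith : 0 ≤ d - 1 - (s 1 - s 0)) hr0
    have := mul_nonneg (by linarith : 0 ≤ d - 1 - (r 1 - r 0)) hs0
    linarith
  obtain hr1 | hr1 := hr0.lt_or_eq
  · obtain rfl := eq_zero_of_crossSum_eq_zero hr hs hcross.symm hr1
    have := mul_pos (by linarith : 0 < d - 1) hr1
    simpa [gainFour, pairSum] using this
  · have hs1 : 0 < pairSum s := by linarith
    obtain rfl := eq_zero_of_crossSum_eq_zero hs hr (by rw [crossSum_comm, ← hcross]) hs1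
    have := mul_pos (by linarith : 0 < d - 1) hs1
    simpa [gainFour, pairSum] using this

theorem gainThree_pos_of_opposed (hr : 0 ≤ r) (hs : 0 ≤ s) (hd : 2 ≤ d) (hrd : r 1 - r 0 = d)
    (hsd : s 1 - s 0 ≤ d) (hneg : pairSum (s - r) < 0) : 0 < gainThree d r s := by
  have hr' : ∀ i, 0 ≤ r i := hr
  have hs' : ∀ i, 0 ≤ s i := hs
  have hgain : 2 * gainThree d r s = (2 * d - 2 - (s 1 - s 0)) * (r 0 + r 1) +
      (d - 2) * (s 0 + s 1) + 2 * (d - 1) * (r 2 + s 2) := by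
    rw [two_mul_gainThree, hrd, Fin.sum_univ_three]
    simp only [Pi.add_apply]
    ring
  have hr01 : 0 < r 0 + r 1 := by linarith [hr' 0]
  have hlast : 0 ≤ r 2 + s 2 := add_nonneg (hr' 2) (hs' 2)
  have hmid : 0 ≤ (d - 2) * (s 0 + s 1) := mul_nonneg (by linarith) (add_nonneg (hs' 0) (hs' 1))
  obtain hlt | heq := (show s 1 - s 0 ≤ 2 * d - 2 by linarith).lt_or_eq
  · have := mul_pos (sub_pos.2 hlt) hr01
    have := mul_nonneg (by linarith : 0 ≤ 2 * (d - 1)) hlast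
    linarith
  · have hd2 : d = 2 := by linarith
    have hsr : s 1 - r 1 = s 0 - r 0 := by linarith
    obtain hlast | hlast := hlast.lt_or_eq
    · have := mul_pos (by linarith : 0 < 2 * (d - 1)) hlast
      rw [heq, sub_self, zero_mul] at hgain
      linarith
    · have hsr2 : s 2 - r 2 = 0 := by linarith [hr' 2, hs' 2]
      simp only [pairSum, Pi.sub_apply, hsr, hsr2] at hneg
      nlinarith

theorem gainFour_pos_of_opposed (hr : 0 ≤ r) (hs : 0 ≤ s) (hd : 2 ≤ d) (hrd : r 1 - r 0 = d)
    (hsd : s 1 - s 0 ≤ d) (hneg : pairSum (s - r) < 0) : 0 < gainFour d r s := by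
  have hgain : gainFour d r s =
      (d - 2) * crossSum r s + (d - (s 1 - s 0)) * pairSum r - pairSum (s - r) := by
    rw [gainFour, hrd, pairSum_add, pairSum_sub]
    ring
  have hX := mul_nonneg (sub_nonneg.2 hd) (crossSum_nonneg hr hs)
  have hE := mul_nonneg (sub_nonneg.2 hsd) (pairSum_nonneg hr)
  linarith

theorem gainThree_one_pos (hr : r 1 < r 0) (hr1 : 0 < r 1) (hs : s 1 ≤ s 0) (hs0 : 0 < s 0) :
    0 < gainThree 1 r s := by
  have hprod : r 1 * s 1 < r 0 * s 0 :=
    (mul_le_mul_of_nonneg_left hs hr1.le).trans_lt (mul_lt_mul_of_pos_right hr hs0)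
  rw [gainThree]
  linarith

theorem gainFour_one_pos (hr0 : 0 ≤ r) (hs0 : 0 ≤ s) (hr : r 1 < r 0) (hr1 : 0 < r 1)
    (hs : s 1 ≤ s 0) (hs1 : 0 < s 0) : 0 < gainFour 1 r s := by
  have hgain : gainFour 1 r s = (s 0 - s 1) * pairSum r + (r 0 - r 1) * pairSum s := by
    rw [gainFour, pairSum_add]
    ring
  have hr' : ∀ i, 0 ≤ r i := hr0
  have hs' : ∀ i, 0 ≤ s i := hs0
  rw [hgain]
  obtain hlt | heq := hs.lt_or_eq
  · have hpair : 0 < pairSum r := by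
      have := mul_pos (hr1.trans hr) hr1
      have := mul_nonneg (hr' 0) (hr' 2)
      have := mul_nonneg (hr' 1) (hr' 2)
      rw [pairSum]
      linarith
    exact add_pos_of_pos_of_nonneg (mul_pos (sub_pos.2 hlt) hpair)
      (mul_nonneg (sub_pos.2 hr).le (pairSum_nonneg hs0))
  · have hpair : 0 < pairSum s := by
      have := mul_pos hs1 (heq ▸ hs1 : 0 < s 1)
      have := mul_nonneg (hs' 0) (hs' 2)
      have := mul_nonneg (hs' 1) (hs' 2)
      rw [pairSum]
      linarith
    exact add_pos_of_nonneg_of_pos (mul_nonneg (sub_nonneg.2 hs) (pairSum_nonneg hr0))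
      (mul_pos (sub_pos.2 hr) hpair)

end Gains

section Move

variable {M : Fin 3 → Fin 3 → ℕ}

theorem natCast_coindepSum_K33 (i : ℕ) : ((K33.coindepSum i (Function.uncurry M) : ℕ) : ℤ) =
    K33.coindepSum i (Function.uncurry fun i j => (M i j : ℤ)) :=
  Multigraph.natCast_coindepSum i _

theorem moveWeight_uncurry : moveWeight (E := K33.E) (Function.uncurry M) (0, 0) (0, 1) =
    Function.uncurry ![![M 0 0 - 1, M 0 1 + 1, M 0 2], M 1, M 2] := by
  funext ⟨i, j⟩
  fin_cases i <;> fin_cases j <;> simp [moveWeight, K33]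

theorem isImprovingMove_of_gains (hlt : M 0 1 < M 0 0)
    (hthree : 0 < gainThree (M 0 0 - M 0 1) (fun c => M 1 c) fun c => M 2 c)
    (hfour : 0 < gainFour (M 0 0 - M 0 1) (fun c => M 1 c) fun c => M 2 c) :
    IsImprovingMove K33 (Function.uncurry M) (0, 0) (0, 1) := by
  have hpos : 1 ≤ M 0 0 := hlt.pos
  refine ⟨fun h => zero_ne_one (congrArg Prod.snd h), ⟨Sum.inl 0, Or.inl rfl, Or.inl rfl⟩,
    hpos, ?_, ?_, ?_⟩
  all_goals
    rw [moveWeight_uncurry]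
  · rw [← Nat.cast_le (α := ℤ), natCast_coindepSum_K33, natCast_coindepSum_K33,
      K33_coindepSum_two, K33_coindepSum_two]
    zify at hlt
    simp only [Fin.sum_univ_three, pairSum, Matrix.cons_val, Nat.cast_sub hpos,
      Nat.cast_add, Nat.cast_one]
    linarith
  · rw [← Nat.cast_lt (α := ℤ), natCast_coindepSum_K33, natCast_coindepSum_K33,
      K33_coindepSum_three, K33_coindepSum_three, ← sub_pos]
    refine hthree.trans_eq ?_
    simp only [gainThree, Fin.sum_univ_three, pairSum, Matrix.cons_val, Nat.cast_sub hpos,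
      Nat.cast_add, Nat.cast_one]
    ring
  · rw [← Nat.cast_lt (α := ℤ), natCast_coindepSum_K33, natCast_coindepSum_K33,
      K33_coindepSum_four, K33_coindepSum_four, ← sub_pos]
    refine hfour.trans_eq ?_
    simp only [gainFour, pairSum, crossSum, Pi.add_apply, Matrix.cons_val, Nat.cast_sub hpos,
      Nat.cast_add, Nat.cast_one]
    ring

end Move

/-- The chain lengths `M i j` of a weak `K33`-subdivision that has no zero cycle (which is what
`pos` expresses) and allows no improving move. -/
structure IsLocallyOptimal (M : Fin 3 → Fin 3 → ℕ) : Prop where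
  pos : 0 < K33.coindepSum 4 (Function.uncurry M)
  not_isImprovingMove : ∀ a b, ¬ IsImprovingMove K33 (Function.uncurry M) a b

namespace IsLocallyOptimal

variable {M : Fin 3 → Fin 3 → ℕ}

theorem comp_iso (hM : IsLocallyOptimal M) {M' : Fin 3 → Fin 3 → ℕ} (φ : MGIso K33 K33)
    (h : Function.uncurry M' = Function.uncurry M ∘ φ.eMap) : IsLocallyOptimal M' where
  pos := by
    rw [h]
    exact hM.pos.trans_eq (φ.coindepSum_comp 4 _).symm
  not_isImprovingMove a b hab := by
    rw [h] at hab
    exact hM.not_isImprovingMove _ _ (hab.map φ)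

theorem permute (hM : IsLocallyOptimal M) (ρ σ : Equiv.Perm (Fin 3)) :
    IsLocallyOptimal fun i j => M (ρ i) (σ j) :=
  hM.comp_iso (.permK33 ρ σ) rfl

theorem transpose (hM : IsLocallyOptimal M) : IsLocallyOptimal fun i j => M j i :=
  hM.comp_iso .swapK33 rfl

theorem pairSum_add_pos (hM : IsLocallyOptimal M) :
    0 < pairSum ((fun c => (M 1 c : ℤ)) + fun c => (M 2 c : ℤ)) := by
  have hpos := hM.pos
  rw [← Nat.cast_pos (α := ℤ), natCast_coindepSum_K33, K33_coindepSum_four] at hpos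
  have hrow : ∀ i, 0 ≤ fun c => (M i c : ℤ) := fun i c => Int.natCast_nonneg _
  have h1 := pairSum_nonneg (hrow 1)
  have h2 := pairSum_nonneg (hrow 2)
  have h12 := crossSum_nonneg (hrow 1) (hrow 2)
  rw [pairSum_add]
  by_contra! hle
  rw [le_antisymm (by linarith) h1, le_antisymm (by linarith) h2,
    le_antisymm (by linarith) h12] at hpos
  simp at hpos

theorem exists_opposing_row (hM : IsLocallyOptimal M) {i j l : Fin 3} (h : M i l + 2 ≤ M i j) :
    ∃ k, M k j + M i j ≤ M k l + M i l := by
  obtain ⟨ρ, rfl⟩ : ∃ ρ : Equiv.Perm (Fin 3), ρ 0 = i := ⟨.swap 0 i, Equiv.swap_apply_left 0 i⟩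
  obtain ⟨σ, rfl, rfl⟩ := exists_perm_fin_three (a := j) (b := l) (by rintro rfl; omega)
  by_contra! hlt
  have h1 := hlt (ρ 1)
  have h2 := hlt (ρ 2)
  have hpos := (hM.permute ρ σ).pairSum_add_pos
  refine (hM.permute ρ σ).not_isImprovingMove _ _ (isImprovingMove_of_gains (by omega) ?_ ?_)
  · exact gainThree_pos_of_unopposed (fun _ => Int.natCast_nonneg _) (fun _ => Int.natCast_nonneg _)
      (by omega) (by omega) (by omega) hpos
  · exact gainFour_pos_of_unopposed (fun _ => Int.natCast_nonneg _) (fun _ => Int.natCast_nonneg _)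
      (by omega) (by omega) (by omega) hpos

theorem exists_opposed_pair (hM : IsLocallyOptimal M) {i j l : Fin 3} (h : M i l + 2 ≤ M i j) :
    ∃ a b, M a l + 2 ≤ M a j ∧ M b j + M a j = M b l + M a l ∧
      ∀ m, M m j + M a l ≤ M m l + M a j ∧ M m l + M a l ≤ M m j + M a j := by
  obtain ⟨a, hmax⟩ := Finite.exists_max fun m => ((M m j : ℤ) - M m l).natAbs
  have hmax_i := hmax i
  obtain hpos | hneg := le_total (M a l) (M a j)
  · obtain ⟨b, hb⟩ := hM.exists_opposing_row (i := a) (j := j) (l := l) (by omega)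
    have hmax_b := hmax b
    exact ⟨a, b, by omega, by omega, fun m => by have := hmax m; omega⟩
  · obtain ⟨b, hb⟩ := hM.exists_opposing_row (i := a) (j := l) (l := j) (by omega)
    have hmax_b := hmax b
    exact ⟨b, a, by omega, by omega, fun m => by have := hmax m; omega⟩

theorem columns_close_or_pairSum_sub_neg (hM : IsLocallyOptimal M) (j l : Fin 3) :
    (∀ i, M i j ≤ M i l + 1 ∧ M i l ≤ M i j + 1) ∨
      pairSum ((fun i => (M i j : ℤ)) - fun i => (M i l : ℤ)) < 0 := by
  rw [or_iff_not_imp_left]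
  intro hfar
  obtain ⟨a, b, hne, hab⟩ : ∃ a b, M a j ≠ M a l ∧ M b j + M a j = M b l + M a l := by
    obtain ⟨i, hi⟩ := not_forall.1 hfar
    obtain h | h : M i l + 2 ≤ M i j ∨ M i j + 2 ≤ M i l := by omega
    · obtain ⟨a, b, ha, hab, -⟩ := hM.exists_opposed_pair h
      exact ⟨a, b, by omega, hab⟩
    · obtain ⟨a, b, ha, hab, -⟩ := hM.exists_opposed_pair h
      exact ⟨a, b, by omega, hab.symm⟩
  rw [pairSum_eq_neg_sq (i := a) (k := b) (by rintro rfl; omega)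
    (by simp only [Pi.sub_apply]; omega), neg_lt_zero]
  exact sq_pos_of_ne_zero (sub_ne_zero.2 (Nat.cast_injective.ne hne))

theorem pairSum_sub_nonneg_of_opposed (hM : IsLocallyOptimal M) (h0 : M 0 1 + 2 ≤ M 0 0)
    (h1 : M 1 0 + M 0 0 = M 1 1 + M 0 1) (h2 : M 2 1 + M 0 1 ≤ M 2 0 + M 0 0) :
    0 ≤ pairSum ((fun c => (M 2 c : ℤ)) - fun c => (M 1 c : ℤ)) := by
  by_contra! hneg
  refine hM.not_isImprovingMove _ _ (isImprovingMove_of_gains (by omega) ?_ ?_)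
  · exact gainThree_pos_of_opposed (fun _ => Int.natCast_nonneg _) (fun _ => Int.natCast_nonneg _)
      (by omega) (by omega) (by omega) hneg
  · exact gainFour_pos_of_opposed (fun _ => Int.natCast_nonneg _) (fun _ => Int.natCast_nonneg _)
      (by omega) (by omega) (by omega) hneg

theorem rows_close_of_opposed (hM : IsLocallyOptimal M) (h0 : M 0 1 + 2 ≤ M 0 0)
    (h1 : M 1 0 + M 0 0 = M 1 1 + M 0 1) (h2 : M 2 1 + M 0 1 ≤ M 2 0 + M 0 0) (j : Fin 3) :
    M 2 j ≤ M 1 j + 1 ∧ M 1 j ≤ M 2 j + 1 :=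
  (hM.transpose.columns_close_or_pairSum_sub_neg 2 1).resolve_right
    (hM.pairSum_sub_nonneg_of_opposed h0 h1 h2).not_gt j

theorem false_of_opposed (hM : IsLocallyOptimal M) (h0 : M 0 1 + 2 ≤ M 0 0)
    (h1 : M 1 0 + M 0 0 = M 1 1 + M 0 1) (h2 : M 2 1 + M 0 1 ≤ M 2 0 + M 0 0)
    (h2' : M 2 0 + M 0 1 ≤ M 2 1 + M 0 0) : False := by
  have hclose := hM.rows_close_of_opposed h0 h1 h2
  have htwo : Equiv.swap (0 : Fin 3) 1 2 = 2 :=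
    Equiv.swap_apply_of_ne_of_ne (by decide) (by decide)
  have hswap := hM.permute (.swap 0 1) (.swap 0 1)
  have hclose' := hswap.rows_close_of_opposed (by simpa using (by omega : M 1 0 + 2 ≤ M 1 1))
    (by simpa using (by omega : M 0 1 + M 1 1 = M 0 0 + M 1 0))
    (by simpa [htwo] using (by omega : M 2 0 + M 1 0 ≤ M 2 1 + M 1 1))
  have h12 := hclose 0
  have h12' := hclose 1
  have h02 := hclose' 0
  have h02' := hclose' 1
  simp only [Equiv.swap_apply_left, Equiv.swap_apply_right, htwo] at h02 h02'
  have hdiff : M 2 0 = M 1 0 + 1 ∧ M 1 1 = M 2 1 + 1 := by omega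
  have hneg : pairSum ((fun c => (M 2 c : ℤ)) - fun c => (M 1 c : ℤ)) < 0 := by
    rw [pairSum_eq_neg_sq (i := 0) (k := 1) zero_ne_one (by simp [hdiff])]
    simp [hdiff]
  exact (hM.pairSum_sub_nonneg_of_opposed h0 h1 h2).not_gt hneg

theorem row_close (hM : IsLocallyOptimal M) (i j l : Fin 3) : M i j ≤ M i l + 1 := by
  by_contra! hlt
  obtain ⟨a, b, ha, hab, hmax⟩ := hM.exists_opposed_pair (i := i) (j := j) (l := l) (by omega)
  obtain ⟨ρ, rfl, rfl⟩ := exists_perm_fin_three (a := a) (b := b) (by rintro rfl; omega)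
  obtain ⟨σ, rfl, rfl⟩ := exists_perm_fin_three (a := j) (b := l) (by rintro rfl; omega)
  have hmax2 := hmax (ρ 2)
  exact (hM.permute ρ σ).false_of_opposed ha hab (by omega) (by omega)

theorem column_close (hM : IsLocallyOptimal M) (i k j : Fin 3) : M i j ≤ M k j + 1 :=
  hM.transpose.row_close j i k

theorem diagonal_close (hM : IsLocallyOptimal M) : M 1 0 ≤ M 0 1 + 1 := by
  by_contra! hlt
  have h00 := hM.row_close 0 0 1
  have h00' := hM.column_close 1 0 0
  have h11 := hM.column_close 1 0 1
  have h11' := hM.row_close 1 0 1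
  have h20 := hM.column_close 1 2 0
  have h21 := hM.column_close 2 0 1
  refine hM.not_isImprovingMove _ _ (isImprovingMove_of_gains (by omega) ?_ ?_)
  · rw [show (M 0 0 : ℤ) - M 0 1 = 1 by omega]
    exact gainThree_one_pos (by omega) (by omega) (by omega) (by omega)
  · rw [show (M 0 0 : ℤ) - M 0 1 = 1 by omega]
    exact gainFour_one_pos (fun _ => Int.natCast_nonneg _) (fun _ => Int.natCast_nonneg _)
      (by omega) (by omega) (by omega) (by omega)

theorem balancedWeights (hM : IsLocallyOptimal M) :
    BalancedWeights (E := K33.E) (Function.uncurry M) := by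
  rintro ⟨i, j⟩ ⟨k, l⟩
  change M i j ≤ M k l + 1
  obtain rfl | hik := eq_or_ne k i
  · exact hM.row_close k j l
  obtain rfl | hjl := eq_or_ne j l
  · exact hM.column_close i k j
  obtain ⟨ρ, rfl, rfl⟩ := exists_perm_fin_three hik
  obtain ⟨σ, rfl, rfl⟩ := exists_perm_fin_three hjl
  exact (hM.permute ρ σ).diagonal_close

end IsLocallyOptimal

theorem K33_connected : K33.Connected := by
  rw [Multigraph.Connected, Multigraph.connOn_iff_forall_bool]
  intro p hp
  have hp' : ∀ i j, p (.inl i) = p (.inr j) := fun i j => hp (i, j) (mem_univ _)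
  rintro (i | i) (j | j)
  · exact (hp' i 0).trans (hp' j 0).symm
  · exact hp' i j
  · exact (hp' j i).symm
  · exact (hp' 0 i).symm.trans (hp' 0 j)

theorem K33_zeroAcyclic_iff (w : K33.E → ℕ) : ZeroAcyclic K33 w ↔ 0 < K33.coindepSum 4 w :=
  haveI : Nonempty K33.V := ⟨Sum.inl 0⟩
  Multigraph.zeroAcyclic_iff_coindepSum_pos K33_connected rfl

theorem exists_isImprovingMove_K33 {w : K33.E → ℕ} (hw : ZeroAcyclic K33 w)
    (himb : ¬ BalancedWeights w) : ∃ a b, IsImprovingMove K33 w a b := by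
  by_contra! hstuck
  have hM : IsLocallyOptimal (Function.curry w) := ⟨(K33_zeroAcyclic_iff w).1 hw, hstuck⟩
  exact himb hM.balancedWeights

/-- if G is an imbalanced weak K_{3,3}-subdivision, then moving one edge
between two suitable adjacent chains yields G' with d₂(G') ≤ d₂(G), d₃(G') < d₃(G)
and d₄(G') < d₄(G). -/
theorem imbalanced_K33_move_edge (G : Multigraph) (w : K33.E → ℕ)
    (hsub : IsWeakSubdivision G K33 w) (himb : ¬ BalancedWeights w) :
    ∃ a b : K33.E, a ≠ b ∧ AdjEdges K33 a b ∧ 0 < w a ∧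
      ZeroAcyclic K33 (moveWeight w a b) ∧
      (subdivide K33 (moveWeight w a b)).d 2 ≤ G.d 2 ∧
      (subdivide K33 (moveWeight w a b)).d 3 < G.d 3 ∧
      (subdivide K33 (moveWeight w a b)).d 4 < G.d 4 := by
  obtain ⟨hacyclic, ⟨φ⟩⟩ := hsub
  obtain ⟨a, b, h⟩ := exists_isImprovingMove_K33 hacyclic himb
  have hacyclic' := (K33_zeroAcyclic_iff _).2 (((K33_zeroAcyclic_iff w).1 hacyclic).trans h.four)
  have hd : ∀ i, (subdivide K33 (moveWeight w a b)).d i + K33.coindepSum i (moveWeight w a b) =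
      G.d i + K33.coindepSum i w := fun i => by rw [h.d_add_coindepSum_eq, φ.d_eq]
  exact ⟨a, b, h.ne, h.adjEdges, h.pos, hacyclic', by linarith [hd 2, h.two],
    by linarith [hd 3, h.three], by linarith [hd 4, h.four]⟩
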